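/- For α > 0 and N ≫ 1, sup over ℓ ∈ Z^∞_* with |ℓ|_α < N of ∏_i (1 + ⟨i⟩^5 |ℓ_i|^5) is at most (1+N)^{C(α) N^{1/(1+α)}} for some constant C(α) > 0. -/

import Mathlib

open scoped BigOperators

noncomputable def wnorm (α : ℝ) (ℓ : ℕ →₀ ℤ) : ℝ :=
  ∑ i ∈ ℓ.support, ((i : ℝ) + 1) ^ α * |(ℓ i : ℝ)|

lemma factor_bound (α : ℝ) (hα : 0 < α) (N : ℝ) (hN : 1 ≤ N) (x m : ℝ) (hx : 1 ≤ x)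
    (hm : 1 ≤ m) (h : x ^ α * m ≤ N) : 1 + x ^ 5 * m ^ 5 ≤ (1 + N) ^ (5 / α + 5) := by
  have hxa : 1 ≤ x ^ α := Real.one_le_rpow hx hα.le
  have h1 : x ^ α ≤ N := by nlinarith
  have h2 : m ≤ N := by nlinarith
  have h3 : x ≤ N ^ (1 / α) := by
    have := Real.rpow_le_rpow (by positivity) h1 (by positivity : 0 ≤ 1 / α)
    rwa [← Real.rpow_mul (by positivity), mul_one_div_cancel hα.ne', Real.rpow_one] at this
  have hN0 : 0 < N := by linarith
  have h4 : x ^ 5 * m ^ 5 ≤ N ^ (5 / α + 5) := by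
    have e : N ^ (5 / α + 5) = (N ^ (1 / α)) ^ 5 * N ^ 5 := by
      rw [Real.rpow_add hN0, ← Real.rpow_natCast, ← Real.rpow_mul hN0.le,
        ← Real.rpow_natCast N 5]
      congr 2
      push_cast
      ring
    rw [e]
    gcongr
  have h5 : (1 : ℝ) ≤ 5 / α + 5 := by
    have : 0 < 5 / α := by positivity
    linarith
  have h6 := Real.add_rpow_le_rpow_add (a := 1) (b := N) zero_le_one hN0.le h5
  rw [Real.one_rpow] at h6
  linarith

lemma card_bound (α : ℝ) (hα : 0 < α) (N : ℝ) (hN : 1 ≤ N) (s : Finset ℕ)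
    (h : ∑ i ∈ s, ((i : ℝ) + 1) ^ α ≤ N) :
    (s.card : ℝ) ≤ 2 * N ^ ((1 : ℝ) / (1 + α)) := by
  set T := N ^ ((1 : ℝ) / (1 + α)) with hT
  have hN0 : 0 < N := by linarith
  have hT0 : 0 < T := by positivity
  have hTN : T * T ^ α = N := by
    rw [← Real.rpow_one_add' hT0.le (by positivity), hT, ← Real.rpow_mul hN0.le,
      one_div_mul_cancel (by positivity), Real.rpow_one]
  have hc := Finset.card_filter_add_card_filter_not (s := s) (fun i : ℕ => (i : ℝ) + 1 ≤ T)
  have ha : ((s.filter (fun i : ℕ => (i : ℝ) + 1 ≤ T)).card : ℝ) ≤ T := by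
    have : s.filter (fun i : ℕ => (i : ℝ) + 1 ≤ T) ⊆ Finset.range ⌊T⌋₊ := by
      intro i hi
      have hi := (Finset.mem_filter.1 hi).2
      rw [Finset.mem_range]
      have : i + 1 ≤ ⌊T⌋₊ := Nat.le_floor (by exact_mod_cast hi)
      omega
    have := Finset.card_le_card this
    rw [Finset.card_range] at this
    exact (Nat.cast_le.2 this).trans (Nat.floor_le hT0.le)
  have hb : ((s.filter (fun i : ℕ => ¬ (i : ℝ) + 1 ≤ T)).card : ℝ) ≤ T := by
    have h1 : ((s.filter (fun i : ℕ => ¬ (i : ℝ) + 1 ≤ T)).card : ℝ) * T ^ α ≤ N := by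
      rw [← nsmul_eq_mul]
      refine le_trans (Finset.card_nsmul_le_sum _ (fun i : ℕ => ((i : ℝ) + 1) ^ α) _ ?_)
        (le_trans (Finset.sum_le_sum_of_subset_of_nonneg (Finset.filter_subset _ _) ?_) h)
      · intro i hi
        have hi := (Finset.mem_filter.1 hi).2
        exact Real.rpow_le_rpow hT0.le (not_le.1 hi).le hα.le
      · intros
        positivity
    rw [← hTN] at h1
    exact le_of_mul_le_mul_right h1 (by positivity)
  rw [← hc]
  push_cast
  linarith

/-- for α > 0 and N ≫ 1,
`sup_{|ℓ|_α < N} ∏_i (1 + ⟨i⟩⁵|ℓ_i|⁵) ≤ (1+N)^{C(α) N^{1/(1+α)}}`. -/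
theorem sup_prod_truncated_bound (α : ℝ) (hα : 0 < α) :
    ∃ C > (0 : ℝ), ∃ N₀ : ℝ, ∀ N : ℝ, N₀ ≤ N → ∀ ℓ : ℕ →₀ ℤ,
      wnorm α ℓ < N →
      ∏ i ∈ ℓ.support, (1 + ((i : ℝ) + 1) ^ 5 * |(ℓ i : ℝ)| ^ 5) ≤
        (1 + N) ^ (C * N ^ ((1 : ℝ) / (1 + α))) := by
  refine ⟨(5 / α + 5) * 2, by positivity, 1, fun N hN ℓ hℓ => ?_⟩
  unfold wnorm at hℓ
  have hm : ∀ i ∈ ℓ.support, (1 : ℝ) ≤ |(ℓ i : ℝ)| := by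
    intro i hi
    exact_mod_cast Int.one_le_abs (Finsupp.mem_support_iff.1 hi)
  have hcard := card_bound α hα N hN ℓ.support (by
    refine le_trans (Finset.sum_le_sum fun i hi => ?_) hℓ.le
    exact le_mul_of_one_le_right (by positivity) (hm i hi))
  have hp : ∏ i ∈ ℓ.support, (1 + ((i : ℝ) + 1) ^ 5 * |(ℓ i : ℝ)| ^ 5) ≤
      ∏ i ∈ ℓ.support, (1 + N) ^ (5 / α + 5) := by
    refine Finset.prod_le_prod (fun i _ => by positivity) fun i hi => ?_
    refine factor_bound α hα N hN _ _ (by simp) (hm i hi) (le_trans ?_ hℓ.le)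
    exact Finset.single_le_sum (f := fun i : ℕ => ((i : ℝ) + 1) ^ α * |(ℓ i : ℝ)|)
      (fun i _ => by positivity) hi
  refine hp.trans ?_
  rw [Finset.prod_const, ← Real.rpow_natCast, ← Real.rpow_mul (by linarith), mul_assoc]
  refine Real.rpow_le_rpow_of_exponent_le (by linarith) ?_
  gcongr
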